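/- Let p be a prime, R a nontrivial commutative ring and q ∈ R with (p)_q = 0 and R q-divisible. Let A = R[x], σ(x) = qx, ∂_σ(x^n) = (n)_q x^{n−1}. Let H be a module over the subring R[x^p] of R[x] and u : H → H an R[x^p]-linear endomorphism such that for every h ∈ H there is n with u^n(h) = 0. Set M = R[x] ⊗_{R[x^p]} H. Then there exists a unique σ-derivation ∂_M on M such that ∂_M(1⊗h) = x^{p−1}⊗u(h) for all h ∈ H, and this ∂_M is quasi-nilpotent. -/

import Mathlib

/-!
By the twisted Leibniz rule applied to `a ⊗ h = a • (1 ⊗ h)`, the only possible formula is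
`d (a ⊗ h) = D a ⊗ h + σ a * e ⊗ u h`, where `e = x ^ (p - 1)`. It is well defined as soon as `σ`
and `D` are linear over `B = R[x ^ p]`: since `(p)_q = 0` implies `q ^ p = 1`, `σ` fixes `x ^ p`,
and `D` kills `x ^ p`. Quasi-nilpotence is inherited from `D`, which lowers degrees, and `u`, as
each of the two summands moves `a ⊗ h` one step down along one of them.
-/

open scoped TensorProduct

/-- The `q`-integer `(n)_q = 1 + q + ⋯ + q^{n-1}`. -/
def qInt {S : Type*} [CommRing S] (q : S) (n : ℕ) : S :=
  ∑ i ∈ Finset.range n, q ^ i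

section QuasiNilpotent

variable {M : Type*}

/-- A self-map is quasi-nilpotent if each element is sent to `0` by some iterate, which may depend
on the element. -/
def IsQuasiNilpotent [Zero M] (f : M → M) : Prop :=
  ∀ m, ∃ n : ℕ, f^[n] m = 0

/-- The elements sent to `0` by some iterate of an additive endomorphism. It serves to check
quasi-nilpotence on additive generators. -/
def eventualKernel [AddCommMonoid M] (f : M →+ M) : AddSubmonoid M where
  carrier := {m | ∃ n : ℕ, f^[n] m = 0}
  zero_mem' := ⟨0, rfl⟩
  add_mem' := by
    rintro a b ⟨n, hn⟩ ⟨k, hk⟩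
    refine ⟨n + k, ?_⟩
    rw [iterate_map_add, add_comm n k, Function.iterate_add_apply, hn, add_comm k n,
      Function.iterate_add_apply, hk, iterate_map_zero, iterate_map_zero, add_zero]

lemma mem_eventualKernel_of_apply_mem [AddCommMonoid M] {f : M →+ M} {m : M}
    (h : f m ∈ eventualKernel f) : m ∈ eventualKernel f :=
  let ⟨n, hn⟩ := h
  ⟨n + 1, hn⟩

end QuasiNilpotent

/-- `d` satisfies the twisted Leibniz rule of a `σ`-derivation over `D`. Taking `d = D` expresses
that `D` is a `σ`-derivation of `A` itself. Additivity of `d` is left to its type. -/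
def IsSigmaDerivation {A M : Type*} [Add M] [SMul A M] (σ D : A → A) (d : M → M) : Prop :=
  ∀ (a : A) (m : M), d (a • m) = D a • m + σ a • d m

lemma IsSigmaDerivation.map_one {A F G : Type*} [Ring A] [FunLike F A A] [OneHomClass F A A]
    [FunLike G A A] {σ : F} {D : G} (hD : IsSigmaDerivation σ D D) : D 1 = 0 := by
  simpa using hD 1 1

section BaseChange

variable {B A H : Type*} [CommSemiring B] [Ring A] [Algebra B A] [AddCommMonoid H] [Module B H]
  (σ : A →ₐ[B] A) (D : A →ₗ[B] A) (e : A) (u : H →ₗ[B] H)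

/-- The `σ`-derivation `a ⊗ h ↦ D a ⊗ h + σ a * e ⊗ u h` on the base change `A ⊗[B] H`. -/
noncomputable def baseChangeSigmaDerivation : A ⊗[B] H →ₗ[B] A ⊗[B] H :=
  D.rTensor H + TensorProduct.map (LinearMap.mulRight B e ∘ₗ σ.toLinearMap) u

lemma baseChangeSigmaDerivation_tmul (a : A) (h : H) :
    baseChangeSigmaDerivation σ D e u (a ⊗ₜ h) = D a ⊗ₜ h + (σ a * e) ⊗ₜ u h :=
  rfl

variable {σ D e u}

lemma baseChangeSigmaDerivation_one_tmul (hD : IsSigmaDerivation σ D D) (h : H) :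
    baseChangeSigmaDerivation σ D e u (1 ⊗ₜ h) = e ⊗ₜ u h := by
  rw [baseChangeSigmaDerivation_tmul, hD.map_one, map_one, one_mul, TensorProduct.zero_tmul,
    zero_add]

lemma isSigmaDerivation_baseChangeSigmaDerivation (hD : IsSigmaDerivation σ D D) :
    IsSigmaDerivation σ D (baseChangeSigmaDerivation σ D e u) := by
  intro a m
  induction m using TensorProduct.induction_on with
  | zero => simp only [smul_zero, map_zero, add_zero]
  | add x y hx hy => rw [smul_add, map_add, hx, hy, map_add, smul_add, smul_add]; abel
  | tmul b h =>
    have leibniz : D (a * b) = D a * b + σ a * D b := hD a b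
    simp only [TensorProduct.smul_tmul', smul_eq_mul, baseChangeSigmaDerivation_tmul, leibniz,
      map_mul, smul_add, TensorProduct.add_tmul, mul_assoc, add_assoc]

lemma IsSigmaDerivation.eq_baseChangeSigmaDerivation {d : A ⊗[B] H →+ A ⊗[B] H}
    (hd : IsSigmaDerivation σ D d) (hd_one : ∀ h : H, d (1 ⊗ₜ h) = e ⊗ₜ u h) :
    d = (baseChangeSigmaDerivation σ D e u).toAddMonoidHom := by
  ext m
  induction m using TensorProduct.induction_on with
  | zero => simp only [map_zero]
  | add x y hx hy => rw [map_add, map_add, hx, hy]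
  | tmul a h =>
    calc d (a ⊗ₜ h) = d (a • (1 ⊗ₜ h)) := by
          rw [TensorProduct.smul_tmul', smul_eq_mul, mul_one]
      _ = D a • (1 ⊗ₜ h) + σ a • (e ⊗ₜ u h) := by rw [hd, hd_one]
      _ = D a ⊗ₜ h + (σ a * e) ⊗ₜ u h := by
          rw [TensorProduct.smul_tmul', TensorProduct.smul_tmul', smul_eq_mul, smul_eq_mul, mul_one]

/-- Double induction on the exponents killing `h` and `a`: of the two summands of the image of
`a ⊗ h`, one has `D a` in place of `a`, the other has `u h` in place of `h`. -/
lemma tmul_mem_eventualKernel_baseChangeSigmaDerivation (hD : IsQuasiNilpotent D) {N : ℕ} {h : H}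
    (hN : u^[N] h = 0) (a : A) :
    a ⊗ₜ h ∈ eventualKernel (baseChangeSigmaDerivation σ D e u).toAddMonoidHom := by
  induction N generalizing h a with
  | zero =>
    obtain rfl : h = 0 := hN
    rw [TensorProduct.tmul_zero]
    exact zero_mem _
  | succ N ih =>
    obtain ⟨n, hn⟩ := hD a
    induction n generalizing a with
    | zero =>
      obtain rfl : a = 0 := hn
      rw [TensorProduct.zero_tmul]
      exact zero_mem _
    | succ n ihn => exact mem_eventualKernel_of_apply_mem (add_mem (ihn (D a) hn) (ih hN _))

lemma isQuasiNilpotent_baseChangeSigmaDerivation (hD : IsQuasiNilpotent D)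
    (hu : IsQuasiNilpotent u) : IsQuasiNilpotent (baseChangeSigmaDerivation σ D e u) := by
  intro m
  change m ∈ eventualKernel (baseChangeSigmaDerivation σ D e u).toAddMonoidHom
  induction m using TensorProduct.induction_on with
  | zero => exact zero_mem _
  | add x y hx hy => exact add_mem hx hy
  | tmul a h =>
    obtain ⟨N, hN⟩ := hu h
    exact tmul_mem_eventualKernel_baseChangeSigmaDerivation hD hN a

theorem unique_sigma_derivation_on_base_change_general (hD : IsSigmaDerivation σ D D)
    (hD_nil : IsQuasiNilpotent D) (hu : IsQuasiNilpotent u) (e : A) :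
    (∃! d : A ⊗[B] H →+ A ⊗[B] H,
      IsSigmaDerivation σ D d ∧ ∀ h : H, d (1 ⊗ₜ h) = e ⊗ₜ u h) ∧
    ∀ d : A ⊗[B] H →+ A ⊗[B] H, IsSigmaDerivation σ D d →
      (∀ h : H, d (1 ⊗ₜ h) = e ⊗ₜ u h) → IsQuasiNilpotent d := by
  refine ⟨⟨(baseChangeSigmaDerivation σ D e u).toAddMonoidHom,
    ⟨isSigmaDerivation_baseChangeSigmaDerivation hD, baseChangeSigmaDerivation_one_tmul hD⟩,
    fun d hd => hd.1.eq_baseChangeSigmaDerivation hd.2⟩, fun d hd hd_one => ?_⟩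
  rw [hd.eq_baseChangeSigmaDerivation hd_one]
  exact isQuasiNilpotent_baseChangeSigmaDerivation hD_nil hu

end BaseChange

section QInt

variable {S : Type*} [CommRing S] {q : S}

lemma qInt_zero (q : S) : qInt q 0 = 0 :=
  Finset.sum_range_zero _

lemma qInt_add (q : S) (m n : ℕ) : qInt q (m + n) = qInt q m + q ^ m * qInt q n := by
  simp only [qInt, Finset.sum_range_add, Finset.mul_sum, pow_add]

lemma pow_eq_one_of_qInt_eq_zero {n : ℕ} (h : qInt q n = 0) : q ^ n = 1 := by
  have geom : qInt q n * (q - 1) = q ^ n - 1 := geom_sum_mul q n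
  rw [h, zero_mul] at geom
  exact sub_eq_zero.mp geom.symm

end QInt

section QDerivative

open Polynomial

variable {R : Type*} [CommRing R] {q : R} {p : ℕ} {σ : R[X] →ₐ[R] R[X]} {D : R[X] →ₗ[R] R[X]}

lemma qScale_monomial (hσ : σ X = C q * X) (n : ℕ) (r : R) :
    σ (monomial n r) = monomial n (r * q ^ n) := by
  rw [← smul_X_eq_monomial, map_smul, map_pow, hσ, mul_pow, ← C_pow, ← smul_eq_C_mul, smul_smul,
    smul_X_eq_monomial]

lemma qDeriv_monomial (hD : ∀ n : ℕ, D (X ^ n) = qInt q n • X ^ (n - 1)) (n : ℕ) (r : R) :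
    D (monomial n r) = monomial (n - 1) (r * qInt q n) := by
  rw [← smul_X_eq_monomial, map_smul, hD, smul_smul, smul_X_eq_monomial]

lemma qDeriv_monomial_mul_monomial (hσ : σ X = C q * X)
    (hD : ∀ n : ℕ, D (X ^ n) = qInt q n • X ^ (n - 1)) (m n : ℕ) (r s : R) :
    D (monomial m r * monomial n s) =
      D (monomial m r) * monomial n s + σ (monomial m r) * D (monomial n s) := by
  simp only [monomial_mul_monomial, qDeriv_monomial hD, qScale_monomial hσ, qInt_add]
  -- The exponents `m - 1` and `n - 1` truncate at `0`, where the coefficient vanishes.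
  rcases m with _ | m
  · simp [qInt_zero, mul_assoc]
  rcases n with _ | n
  · simp [qInt_zero, mul_right_comm]
  rw [show m + 1 + (n + 1) - 1 = m + 1 + n by omega, show m + 1 - 1 + (n + 1) = m + 1 + n by omega,
    Nat.add_sub_cancel n 1, ← map_add]
  congr 1
  ring

lemma isSigmaDerivation_qDeriv (hσ : σ X = C q * X)
    (hD : ∀ n : ℕ, D (X ^ n) = qInt q n • X ^ (n - 1)) : IsSigmaDerivation σ D D := by
  intro a b
  simp only [smul_eq_mul]
  induction a using Polynomial.induction_on' with
  | add a a' ha ha' => rw [add_mul, map_add, ha, ha', map_add, map_add]; ring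
  | monomial m r =>
    induction b using Polynomial.induction_on' with
    | add b b' hb hb' => rw [mul_add, map_add, hb, hb', map_add]; ring
    | monomial n s => exact qDeriv_monomial_mul_monomial hσ hD m n r s

lemma isQuasiNilpotent_qDeriv (hD : ∀ n : ℕ, D (X ^ n) = qInt q n • X ^ (n - 1)) :
    IsQuasiNilpotent D := by
  intro a
  change a ∈ eventualKernel D.toAddMonoidHom
  induction a using Polynomial.induction_on' with
  | add a b ha hb => exact add_mem ha hb
  | monomial n r =>
    induction n generalizing r with
    | zero =>
      apply mem_eventualKernel_of_apply_mem
      rw [LinearMap.toAddMonoidHom_coe, qDeriv_monomial hD, qInt_zero, mul_zero, map_zero]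
      exact zero_mem _
    | succ n ih =>
      apply mem_eventualKernel_of_apply_mem
      rw [LinearMap.toAddMonoidHom_coe, qDeriv_monomial hD]
      exact ih _

lemma qScale_eq_self_of_mem_adjoin (hσ : σ X = C q * X) (hpq : qInt q p = 0) {b : R[X]}
    (hb : b ∈ Algebra.adjoin R {(X : R[X]) ^ p}) : σ b = b := by
  have fixes_X_pow : σ (X ^ p) = X ^ p := by
    rw [map_pow, hσ, mul_pow, ← C_pow, pow_eq_one_of_qInt_eq_zero hpq, C_1, one_mul]
  have adjoin_le : Algebra.adjoin R {(X : R[X]) ^ p} ≤ AlgHom.equalizer σ (AlgHom.id R R[X]) := by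
    rwa [Algebra.adjoin_le_iff, Set.singleton_subset_iff]
  exact adjoin_le hb

lemma qDeriv_eq_zero_of_mem_adjoin (hσ : σ X = C q * X)
    (hD : ∀ n : ℕ, D (X ^ n) = qInt q n • X ^ (n - 1)) (hpq : qInt q p = 0) {b : R[X]}
    (hb : b ∈ Algebra.adjoin R {(X : R[X]) ^ p}) : D b = 0 := by
  have leibniz := isSigmaDerivation_qDeriv hσ hD
  induction hb using Algebra.adjoin_induction with
  | mem x hx => rw [Set.mem_singleton_iff.mp hx, hD, hpq, zero_smul]
  | algebraMap r => rw [Algebra.algebraMap_eq_smul_one, map_smul, leibniz.map_one, smul_zero]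
  | add x y _ _ hx hy => rw [map_add, hx, hy, add_zero]
  | mul x y _ _ hx hy => rw [← smul_eq_mul, leibniz, hx, hy, zero_smul, smul_zero, add_zero]

lemma qDeriv_adjoin_smul (hσ : σ X = C q * X)
    (hD : ∀ n : ℕ, D (X ^ n) = qInt q n • X ^ (n - 1)) (hpq : qInt q p = 0)
    (b : Algebra.adjoin R {(X : R[X]) ^ p}) (a : R[X]) : D (b • a) = b • D a := by
  have leibniz : D ((b : R[X]) • a) = D b • a + σ b • D a := isSigmaDerivation_qDeriv hσ hD b a
  rwa [qDeriv_eq_zero_of_mem_adjoin hσ hD hpq b.2, qScale_eq_self_of_mem_adjoin hσ hpq b.2,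
    zero_smul, zero_add] at leibniz

end QDerivative

/-- let `p` be a prime, `R` a nontrivial commutative ring, `q ∈ R` with
`(p)_q = 0` and `R` `q`-divisible; `A = R[x]`, `σ(x) = qx`, `∂_σ(x^n) = (n)_q x^{n−1}`.
Let `H` be a module over the subring `R[x^p]` of `R[x]` and `u : H → H` an
`R[x^p]`-linear endomorphism such that every `h` is killed by some power of `u`, and set
`M = R[x] ⊗_{R[x^p]} H`.  Then there is a unique `σ`-derivation `∂_M` on `M` (an additive
map satisfying the twisted Leibniz rule) with `∂_M(1⊗h) = x^{p−1}⊗u(h)` for all `h`, and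
any such `∂_M` is quasi-nilpotent. -/
theorem unique_sigma_derivation_on_base_change
    (p : ℕ) (hp : p.Prime)
    (R : Type*) [CommRing R] [Nontrivial R] (q : R)
    (hpq : qInt q p = 0)
    (hdiv : ∀ m : ℕ, 1 ≤ m → qInt q m ≠ 0 → IsUnit (qInt q m))
    (σ : Polynomial R →ₐ[R] Polynomial R)
    (hσ : σ Polynomial.X = Polynomial.C q * Polynomial.X)
    (D : Polynomial R →ₗ[R] Polynomial R)
    (hD : ∀ n : ℕ, D (Polynomial.X ^ n) = qInt q n • Polynomial.X ^ (n - 1))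
    (H : Type*) [AddCommGroup H]
    [Module (Algebra.adjoin R {(Polynomial.X : Polynomial R) ^ p}) H]
    (u : H →ₗ[Algebra.adjoin R {(Polynomial.X : Polynomial R) ^ p}] H)
    (hu : ∀ h : H, ∃ n : ℕ, (⇑u)^[n] h = 0) :
    (∃! d : (Polynomial R ⊗[Algebra.adjoin R {(Polynomial.X : Polynomial R) ^ p}] H) →+
        (Polynomial R ⊗[Algebra.adjoin R {(Polynomial.X : Polynomial R) ^ p}] H),
      (∀ (a : Polynomial R)
          (m : Polynomial R ⊗[Algebra.adjoin R {(Polynomial.X : Polynomial R) ^ p}] H),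
        d (a • m) = D a • m + σ a • d m) ∧
      (∀ h : H, d ((1 : Polynomial R) ⊗ₜ h) = (Polynomial.X ^ (p - 1)) ⊗ₜ u h)) ∧
    (∀ d : (Polynomial R ⊗[Algebra.adjoin R {(Polynomial.X : Polynomial R) ^ p}] H) →+
        (Polynomial R ⊗[Algebra.adjoin R {(Polynomial.X : Polynomial R) ^ p}] H),
      (∀ a m, d (a • m) = D a • m + σ a • d m) →
      (∀ h : H, d ((1 : Polynomial R) ⊗ₜ h) = (Polynomial.X ^ (p - 1)) ⊗ₜ u h) →
      ∀ m, ∃ n : ℕ, (⇑d)^[n] m = 0) :=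
  unique_sigma_derivation_on_base_change_general
    (σ := { σ with commutes' := fun b => qScale_eq_self_of_mem_adjoin hσ hpq b.2 })
    (D := { D with map_smul' := qDeriv_adjoin_smul hσ hD hpq })
    (isSigmaDerivation_qDeriv hσ hD) (isQuasiNilpotent_qDeriv hD) hu (Polynomial.X ^ (p - 1))
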